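/- arXiv:2603.03395 — 3 statements merged into one kernel-verified Lean document; each statement's English description precedes it below -/
import Mathlib

section
/- The set S is everywhere discontinuous: for any two points x, y ∈ S with x < y there exists a point z with x < z < y and z ∉ S. -/
open Filter

/-- The `Q_s`-value of a digit sequence. -/
noncomputable def qsVal (q : ℕ → ℝ) (a : ℕ → ℕ) : ℝ :=
  ∑' k : ℕ, (∑ i ∈ Finset.range (a k), q i) * ∏ j ∈ Finset.range k, q (a j)

/-- The set `S` of real numbers that are `Q_s`-values of digit sequences whose
asymptotic mean of digits does not exist. -/
noncomputable def Sset (s : ℕ) (q : ℕ → ℝ) : Set ℝ :=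
  {x | ∃ a : ℕ → ℕ, (∀ n, a n < s) ∧ x = qsVal q a ∧
    ¬ ∃ L : ℝ, Filter.Tendsto (fun n => (∑ i ∈ Finset.range n, (a i : ℝ)) / n)
      Filter.atTop (nhds L)}

/-!
The partial sums of the series of `val(b)` are themselves values of digit sequences, namely of `b`
truncated by zeros, and they converge to `val(b)`, strictly from below unless `b` ends in zeros.
Two distinct digit sequences with the same value both have a constant tail: after the first
difference the smaller digit must be followed by the largest digit forever, the larger one by zeros
forever. A sequence with a constant tail has an asymptotic mean, so these partial sums are not in
`S`, and just below every point of `S` there are points outside `S`.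
-/

section EventuallyConst

theorem exists_tendsto_mean_of_eventuallyConst {a : ℕ → ℕ} (h : EventuallyConst a atTop) :
    ∃ L : ℝ, Tendsto (fun n => (∑ i ∈ Finset.range n, (a i : ℝ)) / n) atTop (nhds L) := by
  obtain ⟨d, hd⟩ := h.exists_tendsto
  have hlim : Tendsto (fun i => (a i : ℝ)) atTop (nhds (d : ℝ)) :=
    (tendsto_pure_nhds (Nat.cast : ℕ → ℝ) d).comp hd
  exact ⟨d, hlim.cesaro.congr fun n => (div_eq_inv_mul _ _).symm⟩

theorem exists_ge_ne_of_not_eventuallyConst {α : Type*} {a : ℕ → α}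
    (h : ¬ EventuallyConst a atTop) (d : α) (n : ℕ) : ∃ k ≥ n, a k ≠ d := by
  by_contra! hd
  exact h (eventuallyConst_atTop.2 ⟨n, fun k hk => (hd k hk).trans (hd n le_rfl).symm⟩)

end EventuallyConst

/-- The `k`-th summand `β_{a k} · q_{a 0} ⋯ q_{a (k - 1)}` of the series `qsVal q a`, named so that
its partial sums, the left endpoints of the cylinders of `a`, can be spoken of. -/
noncomputable def qsTerm (q : ℕ → ℝ) (a : ℕ → ℕ) (k : ℕ) : ℝ :=
  (∑ i ∈ Finset.range (a k), q i) * ∏ j ∈ Finset.range k, q (a j)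

theorem qsTerm_add (q : ℕ → ℝ) (a : ℕ → ℕ) (k n : ℕ) :
    qsTerm q a (k + n) =
      (∏ j ∈ Finset.range n, q (a j)) * qsTerm q (fun i => a (i + n)) k := by
  simp only [qsTerm, add_comm k n, Finset.prod_range_add, add_comm _ n]
  ring

theorem qsVal_truncate (q : ℕ → ℝ) (a : ℕ → ℕ) (n : ℕ) :
    qsVal q (fun k => if k < n then a k else 0) = ∑ k ∈ Finset.range n, qsTerm q a k := by
  have hzero : ∀ k ∉ Finset.range n, qsTerm q (fun k => if k < n then a k else 0) k = 0 := by
    intro k hk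
    simp [qsTerm, Finset.mem_range.not.1 hk]
  refine (tsum_eq_sum hzero).trans (Finset.sum_congr rfl fun k hk => ?_)
  have hkn : k < n := Finset.mem_range.1 hk
  have hprod : ∏ j ∈ Finset.range k, q (if j < n then a j else 0) =
      ∏ j ∈ Finset.range k, q (a j) :=
    Finset.prod_congr rfl fun j hj => by rw [if_pos ((Finset.mem_range.1 hj).trans hkn)]
  simp only [qsTerm, if_pos hkn, hprod]

section Nonneg

variable {s : ℕ} {q : ℕ → ℝ} {a : ℕ → ℕ}

theorem sum_range_le_sum_range (hq : ∀ i < s, 0 ≤ q i) {m n : ℕ} (hmn : m ≤ n) (hn : n ≤ s) :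
    ∑ i ∈ Finset.range m, q i ≤ ∑ i ∈ Finset.range n, q i :=
  Finset.sum_le_sum_of_subset_of_nonneg (Finset.range_subset_range.2 hmn)
    fun i hi _ => hq i ((Finset.mem_range.1 hi).trans_le hn)

theorem qsTerm_nonneg (hq : ∀ i < s, 0 ≤ q i) (ha : ∀ n, a n < s) (k : ℕ) : 0 ≤ qsTerm q a k :=
  mul_nonneg (Finset.sum_nonneg fun i hi => hq i ((Finset.mem_range.1 hi).trans (ha k)))
    (Finset.prod_nonneg fun j _ => hq _ (ha j))

theorem qsVal_nonneg (hq : ∀ i < s, 0 ≤ q i) (ha : ∀ n, a n < s) : 0 ≤ qsVal q a :=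
  tsum_nonneg (qsTerm_nonneg hq ha)

theorem sum_qsTerm_add_prod_succ (q : ℕ → ℝ) (a : ℕ → ℕ) (n : ℕ) :
    ∑ k ∈ Finset.range (n + 1), qsTerm q a k + ∏ j ∈ Finset.range (n + 1), q (a j) =
      ∑ k ∈ Finset.range n, qsTerm q a k +
        (∑ i ∈ Finset.range (a n + 1), q i) * ∏ j ∈ Finset.range n, q (a j) := by
  simp only [Finset.sum_range_succ, Finset.prod_range_succ, qsTerm]
  ring

variable (hq : ∀ i < s, 0 ≤ q i) (hsum : ∑ i ∈ Finset.range s, q i ≤ 1) (ha : ∀ n, a n < s)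
include hq hsum ha

-- The left side is the right endpoint of the `n`-th cylinder; these endpoints decrease with `n`.
theorem sum_qsTerm_add_prod_le_one (n : ℕ) :
    ∑ k ∈ Finset.range n, qsTerm q a k + ∏ j ∈ Finset.range n, q (a j) ≤ 1 := by
  induction n with
  | zero => simp
  | succ n ih =>
    have hβ : ∑ i ∈ Finset.range (a n + 1), q i ≤ 1 :=
      (sum_range_le_sum_range hq (ha n) le_rfl).trans hsum
    have hprod : 0 ≤ ∏ j ∈ Finset.range n, q (a j) := Finset.prod_nonneg fun j _ => hq _ (ha j)
    rw [sum_qsTerm_add_prod_succ]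
    linarith [mul_le_of_le_one_left hprod hβ]

theorem summable_qsTerm : Summable (qsTerm q a) :=
  summable_of_sum_range_le (qsTerm_nonneg hq ha) fun n =>
    (le_add_of_nonneg_right (Finset.prod_nonneg fun j _ => hq _ (ha j))).trans
      (sum_qsTerm_add_prod_le_one hq hsum ha n)

theorem tendsto_sum_qsTerm :
    Tendsto (fun n => ∑ k ∈ Finset.range n, qsTerm q a k) atTop (nhds (qsVal q a)) :=
  (summable_qsTerm hq hsum ha).hasSum.tendsto_sum_nat

theorem qsVal_le_one : qsVal q a ≤ 1 :=
  (summable_qsTerm hq hsum ha).tsum_le_of_sum_range_le fun n =>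
    (le_add_of_nonneg_right (Finset.prod_nonneg fun j _ => hq _ (ha j))).trans
      (sum_qsTerm_add_prod_le_one hq hsum ha n)

theorem qsVal_eq_sum_add (n : ℕ) :
    qsVal q a = ∑ k ∈ Finset.range n, qsTerm q a k +
      (∏ j ∈ Finset.range n, q (a j)) * qsVal q (fun k => a (k + n)) := by
  have hsplit := (summable_qsTerm hq hsum ha).sum_add_tsum_nat_add n
  simp only [qsTerm_add, tsum_mul_left] at hsplit
  exact hsplit.symm

theorem qsVal_eq_head_add :
    qsVal q a =
      ∑ i ∈ Finset.range (a 0), q i + q (a 0) * qsVal q (fun k => a (k + 1)) := by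
  simpa [qsTerm] using qsVal_eq_sum_add hq hsum ha 1

theorem qsVal_le_sum_add_prod (n : ℕ) :
    qsVal q a ≤ ∑ k ∈ Finset.range n, qsTerm q a k + ∏ j ∈ Finset.range n, q (a j) := by
  rw [qsVal_eq_sum_add hq hsum ha n]
  gcongr
  exact mul_le_of_le_one_right (Finset.prod_nonneg fun j _ => hq _ (ha j))
    (qsVal_le_one hq hsum fun k => ha (k + n))

end Nonneg

section Pos

variable {s : ℕ} {q : ℕ → ℝ} {a b : ℕ → ℕ} (hq : ∀ i < s, 0 < q i)
  (hsum : ∑ i ∈ Finset.range s, q i ≤ 1) (ha : ∀ n, a n < s) (hb : ∀ n, b n < s)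
include hq hsum ha

theorem qsVal_pos {k : ℕ} (hk : a k ≠ 0) : 0 < qsVal q a := by
  have hq₀ : ∀ i < s, 0 ≤ q i := fun i hi => (hq i hi).le
  have hterm : 0 < qsTerm q a k :=
    mul_pos
      (Finset.sum_pos (fun i hi => hq i ((Finset.mem_range.1 hi).trans (ha k)))
        (Finset.nonempty_range_iff.2 hk))
      (Finset.prod_pos fun j _ => hq _ (ha j))
  exact (summable_qsTerm hq₀ hsum ha).tsum_pos (qsTerm_nonneg hq₀ ha) k hterm

theorem qsVal_lt_one {k : ℕ} (hk : a k + 1 < s) : qsVal q a < 1 := by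
  have hq₀ : ∀ i < s, 0 ≤ q i := fun i hi => (hq i hi).le
  have hβ : ∑ i ∈ Finset.range (a k + 1), q i < 1 := calc
    _ < ∑ i ∈ Finset.range (a k + 1 + 1), q i := by
      rw [Finset.sum_range_succ _ (a k + 1)]
      exact lt_add_of_pos_right _ (hq _ hk)
    _ ≤ ∑ i ∈ Finset.range s, q i := sum_range_le_sum_range hq₀ hk le_rfl
    _ ≤ 1 := hsum
  have hprod : 0 < ∏ j ∈ Finset.range k, q (a j) := Finset.prod_pos fun j _ => hq _ (ha j)
  calc qsVal q a
    _ ≤ ∑ i ∈ Finset.range k, qsTerm q a i +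
          (∑ i ∈ Finset.range (a k + 1), q i) * ∏ j ∈ Finset.range k, q (a j) :=
      (qsVal_le_sum_add_prod hq₀ hsum ha (k + 1)).trans_eq (sum_qsTerm_add_prod_succ q a k)
    _ < ∑ i ∈ Finset.range k, qsTerm q a i + ∏ j ∈ Finset.range k, q (a j) := by
      gcongr
      exact mul_lt_of_lt_one_left hprod hβ
    _ ≤ 1 := sum_qsTerm_add_prod_le_one hq₀ hsum ha k

theorem sum_qsTerm_lt_qsVal {n k : ℕ} (hnk : n ≤ k) (hk : a k ≠ 0) :
    ∑ i ∈ Finset.range n, qsTerm q a i < qsVal q a := by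
  have htail : 0 < qsVal q (fun i => a (i + n)) :=
    qsVal_pos hq hsum (fun i => ha (i + n)) (k := k - n) (by rwa [Nat.sub_add_cancel hnk])
  rw [qsVal_eq_sum_add (fun i hi => (hq i hi).le) hsum ha n]
  exact lt_add_of_pos_right _ (mul_pos (Finset.prod_pos fun j _ => hq _ (ha j)) htail)

include hb

theorem tails_eq_of_head_lt_of_qsVal_le (hlt : a 0 < b 0) (hle : qsVal q b ≤ qsVal q a) :
    (∀ k, a (k + 1) + 1 = s) ∧ ∀ k, b (k + 1) = 0 := by
  have hq₀ : ∀ i < s, 0 ≤ q i := fun i hi => (hq i hi).le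
  have ha' : ∀ k, a (k + 1) < s := fun k => ha (k + 1)
  have hb' : ∀ k, b (k + 1) < s := fun k => hb (k + 1)
  have hβ : ∑ i ∈ Finset.range (a 0), q i + q (a 0) ≤ ∑ i ∈ Finset.range (b 0), q i := by
    rw [← Finset.sum_range_succ]
    exact sum_range_le_sum_range hq₀ hlt (hb 0).le
  rw [qsVal_eq_head_add hq₀ hsum ha, qsVal_eq_head_add hq₀ hsum hb] at hle
  have hA : q (a 0) * qsVal q (fun k => a (k + 1)) ≤ q (a 0) :=
    mul_le_of_le_one_right (hq₀ _ (ha 0)) (qsVal_le_one hq₀ hsum ha')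
  have hB : 0 ≤ q (b 0) * qsVal q (fun k => b (k + 1)) :=
    mul_nonneg (hq₀ _ (hb 0)) (qsVal_nonneg hq₀ hb')
  constructor
  · by_contra! ⟨k, hk⟩
    have := mul_lt_of_lt_one_right (hq _ (ha 0))
      (qsVal_lt_one hq hsum ha' (lt_of_le_of_ne (ha' k) hk))
    linarith
  · by_contra! ⟨k, hk⟩
    have := mul_pos (hq _ (hb 0)) (qsVal_pos hq hsum hb' hk)
    linarith

theorem tails_eq_of_lt_of_qsVal_le {m : ℕ} (heq : ∀ k < m, a k = b k) (hlt : a m < b m)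
    (hle : qsVal q b ≤ qsVal q a) : (∀ k > m, a k + 1 = s) ∧ ∀ k > m, b k = 0 := by
  have hq₀ : ∀ i < s, 0 ≤ q i := fun i hi => (hq i hi).le
  have hprod : ∏ j ∈ Finset.range m, q (a j) = ∏ j ∈ Finset.range m, q (b j) :=
    Finset.prod_congr rfl fun j hj => by rw [heq j (Finset.mem_range.1 hj)]
  have hprefix : ∑ k ∈ Finset.range m, qsTerm q a k = ∑ k ∈ Finset.range m, qsTerm q b k := by
    simp only [← qsVal_truncate]
    congr with k
    split_ifs with hk
    exacts [heq k hk, rfl]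
  have htail : qsVal q (fun k => b (k + m)) ≤ qsVal q (fun k => a (k + m)) := by
    rw [qsVal_eq_sum_add hq₀ hsum ha m, qsVal_eq_sum_add hq₀ hsum hb m, hprefix, hprod] at hle
    exact le_of_mul_le_mul_left (le_of_add_le_add_left hle)
      (Finset.prod_pos fun j _ => hq _ (hb j))
  obtain ⟨hat, hbt⟩ := tails_eq_of_head_lt_of_qsVal_le hq hsum (fun k => ha (k + m))
    (fun k => hb (k + m)) (by simpa only [zero_add] using hlt) htail
  have hidx : ∀ k > m, k - m - 1 + 1 + m = k := by omega
  exact ⟨fun k hk => hidx k hk ▸ hat (k - m - 1), fun k hk => hidx k hk ▸ hbt (k - m - 1)⟩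

theorem eventuallyConst_of_qsVal_eq_of_ne (heq : qsVal q a = qsVal q b) (hne : a ≠ b) :
    EventuallyConst a atTop := by
  have hfirst : ∀ k < PiNat.firstDiff a b, a k = b k :=
    fun k => PiNat.apply_eq_of_lt_firstDiff
  obtain ⟨d, hd⟩ : ∃ d, ∀ k > PiNat.firstDiff a b, a k = d := by
    rcases (PiNat.apply_firstDiff_ne hne).lt_or_gt with hlt | hgt
    · have := (tails_eq_of_lt_of_qsVal_le hq hsum ha hb hfirst hlt heq.ge).1
      exact ⟨s - 1, fun k hk => Nat.eq_sub_of_add_eq (this k hk)⟩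
    · exact ⟨0, (tails_eq_of_lt_of_qsVal_le hq hsum hb ha (fun k hk => (hfirst k hk).symm)
        hgt heq.le).2⟩
  exact (EventuallyConst.const d).congr
    ((eventually_gt_atTop _).mono fun k hk => (hd k hk).symm)

end Pos

section Sset

variable {s : ℕ} {q : ℕ → ℝ} {a : ℕ → ℕ} (hq : ∀ i < s, 0 < q i)
  (hsum : ∑ i ∈ Finset.range s, q i ≤ 1)
include hq hsum

theorem qsVal_notMem_Sset_of_eventuallyConst (ha : ∀ n, a n < s)
    (hconst : EventuallyConst a atTop) : qsVal q a ∉ Sset s q := by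
  rintro ⟨c, hc, hval, hmean⟩
  have hcne : ¬ EventuallyConst c atTop := mt exists_tendsto_mean_of_eventuallyConst hmean
  exact hcne (eventuallyConst_of_qsVal_eq_of_ne hq hsum hc ha hval.symm
    fun hca => hcne (hca ▸ hconst))

theorem sum_qsTerm_notMem_Sset (ha : ∀ n, a n < s) (n : ℕ) :
    ∑ k ∈ Finset.range n, qsTerm q a k ∉ Sset s q := by
  rw [← qsVal_truncate]
  refine qsVal_notMem_Sset_of_eventuallyConst hq hsum (fun k => ?_) ?_
  · split_ifs
    exacts [ha k, (Nat.zero_le _).trans_lt (ha 0)]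
  · exact (EventuallyConst.const 0).congr
      ((eventually_ge_atTop n).mono fun k hk => (if_neg hk.not_gt).symm)

theorem exists_notMem_Sset_of_lt_mem {x y : ℝ} (hy : y ∈ Sset s q) (hxy : x < y) :
    ∃ z ∉ Sset s q, x < z ∧ z < y := by
  obtain ⟨b, hb, rfl, hmean⟩ := hy
  obtain ⟨n, hn⟩ := ((tendsto_sum_qsTerm (fun i hi => (hq i hi).le) hsum hb).eventually_const_lt
    hxy).exists
  obtain ⟨k, hnk, hk⟩ := exists_ge_ne_of_not_eventuallyConst
    (mt exists_tendsto_mean_of_eventuallyConst hmean) 0 n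
  exact ⟨_, sum_qsTerm_notMem_Sset hq hsum hb n, hn, sum_qsTerm_lt_qsVal hq hsum hb hnk hk⟩

theorem Sset_everywhere_discontinuous_general : Dense (Sset s q)ᶜ := by
  refine dense_of_exists_between fun x y hxy => ?_
  obtain ⟨w, hxw, hwy⟩ := exists_between hxy
  by_cases hw : w ∈ Sset s q
  · obtain ⟨z, hz, hxz, hzw⟩ := exists_notMem_Sset_of_lt_mem hq hsum hw hxw
    exact ⟨z, hz, hxz, hzw.trans hwy⟩
  · exact ⟨w, hw, hxw, hwy⟩

end Sset

/-- The set `S` is everywhere discontinuous: between any two of its points there is a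
point not in `S`. -/
theorem Sset_everywhere_discontinuous (s : ℕ) (hs : 2 ≤ s) (q : ℕ → ℝ)
    (hq : ∀ i < s, 0 < q i) (hsum : ∑ i ∈ Finset.range s, q i = 1) :
    ∀ x ∈ Sset s q, ∀ y ∈ Sset s q, x < y →
      ∃ z : ℝ, x < z ∧ z < y ∧ z ∉ Sset s q := by
  intro x _ y _ hxy
  obtain ⟨z, hz, hxz, hzy⟩ :=
    (Sset_everywhere_discontinuous_general hq hsum.le).exists_between hxy
  exact ⟨z, hxz, hzy, hz⟩
end

section
/- The set S is superfractal: its Hausdorff–Besicovitch dimension equals 1, i.e. dimH(S) = 1. -/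
open Filter

/-!
By monotonicity only `1 ≤ dimH S` is at stake. Let `E` be the set of digit sequences that do have an
asymptotic mean. Every `x ∈ [0, 1)` has an expansion, so `[0, 1) ⊆ val(E) ∪ S` and it suffices to
show `r * dimH (val(E)) ≤ dimH S` for every `r < 1`.

Insert one digit of a fixed sequence `c` without asymptotic mean after every `K` digits of `a ∈ E`.
The new sequence has no mean, so its value lies in `S`. With `δ = min q_i`, the inserted digits
shrink a cylinder of rank `n` by a factor of at least `δ ^ (n / K)`, which for large `K` is
negligible against the length of the cylinder, itself at most `(1 - δ) ^ n`. Hence recovering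
`val(a)` from the value of the new sequence is a Hölder map of exponent `r`. That values of
sequences from neighbouring cylinders do not come too close to each other is ensured by choosing `c`
without two consecutive zeros.
-/

open scoped Topology NNReal ENNReal

section HausdorffDimension

lemma dimH_image_le_of_edist_le {ι X Y : Type*} [EMetricSpace X] [EMetricSpace Y]
    {f : ι → Y} {g : ι → X} {E : Set ι} {C r : ℝ≥0} (hr : 0 < r)
    (hfg : ∀ a ∈ E, ∀ b ∈ E, edist (f a) (f b) ≤ C * edist (g a) (g b) ^ (r : ℝ)) :
    dimH (f '' E) ≤ dimH (g '' E) / r := by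
  rcases E.eq_empty_or_nonempty with rfl | ⟨a₀, -⟩
  · simp
  have : Nonempty ι := ⟨a₀⟩
  set φ : X → ι := Function.invFunOn g E
  have hφ : ∀ y ∈ g '' E, φ y ∈ E ∧ g (φ y) = y := fun y hy =>
    ⟨Function.invFunOn_mem hy, Function.invFunOn_eq hy⟩
  have holder : HolderOnWith C r (f ∘ φ) (g '' E) := fun x hx y hy => by
    simpa only [Function.comp_apply, (hφ x hx).2, (hφ y hy).2] using hfg _ (hφ x hx).1 _ (hφ y hy).1
  have image_eq : f '' E = (f ∘ φ) '' (g '' E) := by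
    rw [Set.image_image]
    refine Set.image_congr fun a ha => ?_
    obtain ⟨hmem, heq⟩ := hφ (g a) (Set.mem_image_of_mem g ha)
    simpa [heq, hr] using hfg a ha _ hmem
  exact image_eq ▸ holder.dimH_image_le hr

end HausdorffDimension

section Interleave

variable {α M : Type*} {K t : ℕ}

/-- The sequence obtained from `a` by inserting one term of `c` after every `K` terms of `a`.
Exactly `n / (K + 1)` of its terms before the `n`-th come from `c`. -/
def interleave (K : ℕ) (c a : ℕ → α) (n : ℕ) : α :=
  if n % (K + 1) = K then c (n / (K + 1)) else a (n - n / (K + 1))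

lemma interleave_mul_add_eq_ite (c a : ℕ → α) (J : ℕ) (ht : t ≤ K) :
    interleave K c a (J * (K + 1) + t) = if t = K then c J else a (J * K + t) := by
  have hdiv : (J * (K + 1) + t) / (K + 1) = J := by
    rw [mul_comm, Nat.mul_add_div K.succ_pos, Nat.div_eq_of_lt (by omega), add_zero]
  have hsub : J * (K + 1) + t - J = J * K + t := by
    rw [mul_add_one]
    omega
  rw [interleave, hdiv, hsub, Nat.mul_add_mod_of_lt (by omega)]

lemma interleave_mul_add (c a : ℕ → α) (J : ℕ) (ht : t < K) :
    interleave K c a (J * (K + 1) + t) = a (J * K + t) :=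
  (interleave_mul_add_eq_ite c a J ht.le).trans (if_neg ht.ne)

lemma interleave_mul_add_self (c a : ℕ → α) (J : ℕ) :
    interleave K c a (J * (K + 1) + K) = c J :=
  (interleave_mul_add_eq_ite c a J le_rfl).trans (if_pos rfl)

lemma interleave_mem {A : Set α} {c a : ℕ → α} (hc : ∀ n, c n ∈ A) (ha : ∀ n, a n ∈ A) (n : ℕ) :
    interleave K c a n ∈ A := by
  unfold interleave
  split_ifs
  exacts [hc _, ha _]

lemma interleave_congr {a b : ℕ → α} (c : ℕ → α) {J : ℕ} (ht : t < K)
    (hab : ∀ i < J * K + t, a i = b i) :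
    ∀ i < J * (K + 1) + t, interleave K c a i = interleave K c b i := by
  intro i hi
  obtain ⟨I, u, hu, rfl⟩ : ∃ I u, u ≤ K ∧ i = I * (K + 1) + u :=
    ⟨i / (K + 1), i % (K + 1), Nat.le_of_lt_succ (Nat.mod_lt _ K.succ_pos),
      (Nat.div_add_mod' _ _).symm⟩
  rw [interleave_mul_add_eq_ite c a I hu, interleave_mul_add_eq_ite c b I hu]
  split_ifs with huK
  · rfl
  have hIJ : I ≤ J := by
    by_contra! hJI
    nlinarith
  refine hab _ ?_
  rcases hIJ.eq_or_lt with rfl | hlt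
  · omega
  · have : (I + 1) * K ≤ J * K := Nat.mul_le_mul_right K hlt
    rw [add_one_mul] at this
    omega

lemma exists_interleave_ne_zero [Zero α] {c : ℕ → α} (hc : ∀ n, c n ≠ 0 ∨ c (n + 1) ≠ 0) (a : ℕ → α)
    (N : ℕ) : ∃ k ≤ 2 * K + 1, interleave K c a (k + N) ≠ 0 := by
  have hdiv := Nat.div_add_mod' N (K + 1)
  have hmod : N % (K + 1) < K + 1 := Nat.mod_lt _ K.succ_pos
  rcases hc (N / (K + 1)) with hne | hne <;> rw [← interleave_mul_add_self (K := K) c a] at hne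
  · refine ⟨K - N % (K + 1), by omega, ?_⟩
    convert hne using 2
    omega
  · refine ⟨2 * K + 1 - N % (K + 1), by omega, ?_⟩
    convert hne using 2
    rw [add_one_mul]
    omega

@[to_additive]
lemma prod_range_interleave [CommMonoid M] (f : α → M) (c a : ℕ → α) (J : ℕ) (ht : t ≤ K) :
    ∏ i ∈ Finset.range (J * (K + 1) + t), f (interleave K c a i) =
      (∏ i ∈ Finset.range (J * K + t), f (a i)) * ∏ j ∈ Finset.range J, f (c j) := by
  have block (J : ℕ) {t : ℕ} (ht : t ≤ K) :
      ∏ i ∈ Finset.range t, f (interleave K c a (J * (K + 1) + i)) =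
        ∏ i ∈ Finset.range t, f (a (J * K + i)) :=
    Finset.prod_congr rfl fun i hi => by
      rw [interleave_mul_add c a J ((Finset.mem_range.1 hi).trans_le ht)]
  have full_blocks : ∏ i ∈ Finset.range (J * (K + 1)), f (interleave K c a i) =
      (∏ i ∈ Finset.range (J * K), f (a i)) * ∏ j ∈ Finset.range J, f (c j) := by
    induction J with
    | zero => simp
    | succ J ih =>
      rw [Nat.succ_mul, Finset.prod_range_add, Finset.prod_range_succ _ K, ih, block J le_rfl,
        interleave_mul_add_self, Nat.succ_mul, Finset.prod_range_add, Finset.prod_range_succ _ J]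
      exact mul_mul_mul_comm _ _ _ _
  rw [Finset.prod_range_add, Finset.prod_range_add, block J ht, full_blocks, mul_right_comm]

end Interleave

section DigitMean

variable {K : ℕ} {a c : ℕ → ℕ}

/-- The asymptotic mean of the digits of `a` exists. -/
def HasDigitMean (a : ℕ → ℕ) : Prop :=
  ∃ L : ℝ, Tendsto (fun n : ℕ => (∑ i ∈ Finset.range n, (a i : ℝ)) / n) atTop (𝓝 L)

/-- The sequences of digits less than `s` that have an asymptotic mean: the set `E` above. -/
def digitMeanSeqs (s : ℕ) : Set (ℕ → ℕ) := {a | (∀ n, a n < s) ∧ HasDigitMean a}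

lemma hasDigitMean_const (d : ℕ) : HasDigitMean fun _ => d := by
  refine ⟨d, tendsto_const_nhds.congr' ?_⟩
  filter_upwards [eventually_ne_atTop 0] with n hn
  simp [hn]

lemma HasDigitMean.of_interleave (hca : HasDigitMean (interleave K c a)) (hK : 0 < K)
    (ha : HasDigitMean a) : HasDigitMean c := by
  obtain ⟨L, hL⟩ := ha
  obtain ⟨M, hM⟩ := hca
  have hmulK : Tendsto (fun J : ℕ => J * K) atTop atTop := tendsto_id.atTop_mul_const' hK
  have hmulK1 : Tendsto (fun J : ℕ => J * (K + 1)) atTop atTop :=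
    tendsto_id.atTop_mul_const' K.succ_pos
  refine ⟨M * (K + 1) - L * K,
    (((hM.comp hmulK1).mul_const _).sub ((hL.comp hmulK).mul_const _)).congr' ?_⟩
  filter_upwards [eventually_gt_atTop 0] with J hJ
  have hsum := sum_range_interleave (fun d : ℕ => (d : ℝ)) c a J K.zero_le
  simp only [add_zero] at hsum
  simp only [Function.comp_apply, hsum]
  push_cast
  field_simp
  ring

/-- The parity of `⌊log₂ n⌋`: a `0`-`1` sequence without asymptotic mean, constant on each dyadic
block `[2 ^ k, 2 ^ (k + 1))`. -/
def dyadicParity (n : ℕ) : ℕ := Nat.log 2 n % 2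

lemma sum_range_dyadicParity (k : ℕ) :
    ∑ i ∈ Finset.range (2 ^ (k + 1)), (dyadicParity i : ℝ) =
      ∑ i ∈ Finset.range (2 ^ k), (dyadicParity i : ℝ) + 2 ^ k * (k % 2 : ℕ) := by
  have block : ∀ i ∈ Finset.range (2 ^ k), (dyadicParity (2 ^ k + i) : ℝ) = (k % 2 : ℕ) := by
    intro i hi
    rw [Finset.mem_range] at hi
    rw [dyadicParity, Nat.log_eq_of_pow_le_of_lt_pow (m := k) (by omega) (by rw [pow_succ]; omega)]
  rw [pow_succ, mul_two, Finset.sum_range_add, Finset.sum_congr rfl block]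
  simp

lemma not_tendsto_mod_two (L : ℝ) : ¬ Tendsto (fun k : ℕ => ((k % 2 : ℕ) : ℝ)) atTop (𝓝 L) := by
  intro h
  have hdouble : Tendsto (fun k : ℕ => 2 * k) atTop atTop := tendsto_id.const_mul_atTop' two_pos
  have heven : Tendsto (fun _ : ℕ => (0 : ℝ)) atTop (𝓝 L) := by
    simpa [Function.comp_def] using h.comp hdouble
  have hodd : Tendsto (fun _ : ℕ => (1 : ℝ)) atTop (𝓝 L) := by
    simpa [Function.comp_def, Nat.add_mod] using h.comp ((tendsto_add_atTop_nat 1).comp hdouble)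
  exact zero_ne_one <| (tendsto_nhds_unique tendsto_const_nhds heven).trans
    (tendsto_nhds_unique hodd tendsto_const_nhds)

lemma not_hasDigitMean_dyadicParity : ¬ HasDigitMean dyadicParity := by
  rintro ⟨L, hL⟩
  have hdyadic := hL.comp (tendsto_pow_atTop_atTop_of_one_lt one_lt_two)
  -- the mean over `[2 ^ k, 2 ^ (k + 1))` is twice the mean up to `2 ^ (k + 1)` minus the one up
  -- to `2 ^ k`
  refine not_tendsto_mod_two (2 * L - L)
    ((((hdyadic.comp (tendsto_add_atTop_nat 1)).const_mul 2).sub hdyadic).congr fun k => ?_)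
  simp only [Function.comp_apply, sum_range_dyadicParity]
  push_cast
  rw [pow_succ]
  field_simp
  ring

/-- The digits to be inserted: a `0`-`1` sequence without asymptotic mean and without two
consecutive zeros. -/
def markerDigits : ℕ → ℕ := interleave 1 dyadicParity fun _ => 1

lemma markerDigits_lt_two (n : ℕ) : markerDigits n < 2 :=
  interleave_mem (A := Set.Iio 2) (c := dyadicParity) (fun _ => Nat.mod_lt _ two_pos)
    (fun _ => Set.mem_Iio.2 one_lt_two) n

lemma markerDigits_ne_zero_or_succ_ne_zero (n : ℕ) :
    markerDigits n ≠ 0 ∨ markerDigits (n + 1) ≠ 0 := by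
  have ne_zero_of_even {m : ℕ} (hm : m % 2 = 0) : markerDigits m ≠ 0 := by
    simp [markerDigits, interleave, hm]
  rcases Nat.mod_two_eq_zero_or_one n with hn | hn
  · exact .inl (ne_zero_of_even hn)
  · exact .inr (ne_zero_of_even (by omega))

lemma not_hasDigitMean_markerDigits : ¬ HasDigitMean markerDigits := fun h =>
  not_hasDigitMean_dyadicParity (h.of_interleave one_pos (hasDigitMean_const 1))

end DigitMean

/-- The offset `β_d = q_0 + ⋯ + q_{d-1}` of the digit `d`. -/
noncomputable def qsBeta (q : ℕ → ℝ) (d : ℕ) : ℝ := ∑ i ∈ Finset.range d, q i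

/-- The length of the cylinder of rank `n` around the digit sequence `a`. -/
noncomputable def cylLength (q : ℕ → ℝ) (a : ℕ → ℕ) (n : ℕ) : ℝ := ∏ j ∈ Finset.range n, q (a j)

/-- The standing assumptions on the weights of a `Q_s`-expansion. -/
structure IsQsWeights (s : ℕ) (q : ℕ → ℝ) : Prop where
  pos : ∀ i < s, 0 < q i
  sum_eq_one : ∑ i ∈ Finset.range s, q i = 1

lemma exists_pow_rpow_le {ρ ε p : ℝ} (hρ₀ : 0 ≤ ρ) (hρ₁ : ρ < 1) (hp : 0 < p) (hε : 0 < ε) :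
    ∃ K : ℕ, 0 < K ∧ (ρ ^ K) ^ p ≤ ε := by
  have hlim := tendsto_pow_atTop_nhds_zero_of_lt_one (Real.rpow_nonneg hρ₀ p)
    (Real.rpow_lt_one hρ₀ hρ₁ hp)
  obtain ⟨K, hK, hlt⟩ := ((eventually_gt_atTop 0).and (hlim.eventually_lt_const hε)).exists
  exact ⟨K, hK, (Real.rpow_pow_comm hρ₀ p K).symm.trans_le hlt.le⟩

section CylLength

variable {K n t : ℕ} {q : ℕ → ℝ} {a c : ℕ → ℕ} {δ ρ r : ℝ}

lemma cylLength_succ (q : ℕ → ℝ) (a : ℕ → ℕ) (n : ℕ) :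
    cylLength q a (n + 1) = cylLength q a n * q (a n) :=
  Finset.prod_range_succ _ n

lemma cylLength_succ' (q : ℕ → ℝ) (a : ℕ → ℕ) (n : ℕ) :
    cylLength q a (n + 1) = q (a 0) * cylLength q (fun k => a (k + 1)) n :=
  (Finset.prod_range_succ' _ n).trans (mul_comm _ _)

lemma pow_le_cylLength (hδ : 0 ≤ δ) (ha : ∀ n, δ ≤ q (a n)) : δ ^ n ≤ cylLength q a n := by
  simpa [cylLength] using Finset.prod_le_prod (s := Finset.range n) (fun _ _ => hδ) fun i _ => ha i

lemma cylLength_le_pow (ha₀ : ∀ n, 0 ≤ q (a n)) (ha : ∀ n, q (a n) ≤ ρ) :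
    cylLength q a n ≤ ρ ^ n := by
  simpa [cylLength] using
    Finset.prod_le_prod (s := Finset.range n) (fun i _ => ha₀ i) fun i _ => ha i

lemma cylLength_interleave (q : ℕ → ℝ) (c a : ℕ → ℕ) (J : ℕ) (ht : t ≤ K) :
    cylLength q (interleave K c a) (J * (K + 1) + t) =
      cylLength q a (J * K + t) * cylLength q c J :=
  prod_range_interleave q c a J ht

lemma cylLength_le_cylLength_interleave_rpow (ha : ∀ n, q (a n) ∈ Set.Ioc 0 ρ)
    (hc : ∀ n, δ ≤ q (c n)) (hδ : 0 ≤ δ) (hρ : ρ ≤ 1) (hr₀ : 0 ≤ r) (hr₁ : r ≤ 1)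
    (hK : (ρ ^ K) ^ (1 - r) ≤ δ ^ r) (J : ℕ) (ht : t ≤ K) :
    cylLength q a (J * K + t) ≤ cylLength q (interleave K c a) (J * (K + 1) + t) ^ r := by
  rw [cylLength_interleave q c a J ht]
  set P := cylLength q a (J * K + t)
  have hP : 0 < P := Finset.prod_pos fun i _ => (ha i).1
  have hρ₀ : 0 ≤ ρ := (ha 0).1.le.trans (ha 0).2
  have hP_le : P ≤ (ρ ^ K) ^ J := calc
    P ≤ ρ ^ (J * K + t) := cylLength_le_pow (fun n => (ha n).1.le) fun n => (ha n).2
    _ ≤ ρ ^ (J * K) := pow_le_pow_of_le_one hρ₀ hρ (Nat.le_add_right _ _)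
    _ = (ρ ^ K) ^ J := by rw [mul_comm, pow_mul]
  calc P = P ^ r * P ^ (1 - r) := by rw [← Real.rpow_add hP, add_sub_cancel, Real.rpow_one]
    _ ≤ P ^ r * ((ρ ^ K) ^ J) ^ (1 - r) := by gcongr
    _ = P ^ r * ((ρ ^ K) ^ (1 - r)) ^ J := by rw [Real.rpow_pow_comm (pow_nonneg hρ₀ K)]
    _ ≤ P ^ r * (δ ^ r) ^ J := by gcongr
    _ = (P * δ ^ J) ^ r := by
      rw [Real.mul_rpow hP.le (by positivity), Real.rpow_pow_comm hδ]
    _ ≤ (P * cylLength q c J) ^ r := by gcongr; exact pow_le_cylLength hδ hc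

end CylLength

namespace IsQsWeights

variable {s K N n k : ℕ} {q : ℕ → ℝ} {a b c : ℕ → ℕ} {δ ρ r : ℝ}

lemma qsBeta_mono (h : IsQsWeights s q) {d e : ℕ} (hde : d ≤ e) (hes : e ≤ s) :
    qsBeta q d ≤ qsBeta q e :=
  Finset.sum_le_sum_of_subset_of_nonneg (Finset.range_mono hde) fun i hi _ =>
    (h.pos i ((Finset.mem_range.1 hi).trans_le hes)).le

lemma qsBeta_add_le (h : IsQsWeights s q) {d e : ℕ} (hde : d < e) (hes : e ≤ s) :
    qsBeta q d + q d ≤ qsBeta q e := by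
  simpa only [qsBeta, Finset.sum_range_succ] using h.qsBeta_mono (Nat.succ_le_of_lt hde) hes

lemma qsBeta_nonneg (h : IsQsWeights s q) {d : ℕ} (hd : d ≤ s) : 0 ≤ qsBeta q d := by
  simpa [qsBeta] using h.qsBeta_mono d.zero_le hd

lemma qsBeta_add_le_one (h : IsQsWeights s q) {d : ℕ} (hd : d < s) : qsBeta q d + q d ≤ 1 :=
  (h.qsBeta_add_le hd le_rfl).trans_eq h.sum_eq_one

lemma le_one (h : IsQsWeights s q) {d : ℕ} (hd : d < s) : q d ≤ 1 := by
  linarith [h.qsBeta_add_le_one hd, h.qsBeta_nonneg hd.le]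

lemma exists_forall_mem_Icc (h : IsQsWeights s q) (hs : 2 ≤ s) :
    ∃ δ > 0, ∃ ρ < 1, ∀ i < s, q i ∈ Set.Icc δ ρ := by
  obtain ⟨m, hm, hmin⟩ := Finset.exists_min_image (Finset.range s) q ⟨0, by simp; omega⟩
  simp only [Finset.mem_range] at hm hmin
  refine ⟨q m, h.pos m hm, 1 - q m, sub_lt_self 1 (h.pos m hm), fun i hi => ⟨hmin i hi, ?_⟩⟩
  obtain ⟨j, hj, hij⟩ : ∃ j < s, j ≠ i := by
    rcases eq_or_ne i 0 with rfl | hi0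
    exacts [⟨1, by omega, one_ne_zero⟩, ⟨0, by omega, hi0.symm⟩]
  have hsum : q j + q i ≤ 1 := by
    rw [← Finset.sum_pair hij, ← h.sum_eq_one]
    refine Finset.sum_le_sum_of_subset_of_nonneg ?_ fun k hk _ => (h.pos k (by simpa using hk)).le
    simp [Finset.insert_subset_iff, hi, hj]
  linarith [hmin j hj]

lemma cylLength_pos (h : IsQsWeights s q) (ha : ∀ n, a n < s) (n : ℕ) : 0 < cylLength q a n :=
  Finset.prod_pos fun i _ => h.pos _ (ha i)

lemma qsVal_term_nonneg (h : IsQsWeights s q) (ha : ∀ n, a n < s) (k : ℕ) :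
    0 ≤ qsBeta q (a k) * cylLength q a k :=
  mul_nonneg (h.qsBeta_nonneg (ha k).le) (h.cylLength_pos ha k).le

lemma sum_range_qsVal_term_add_cylLength_le_one (h : IsQsWeights s q) (ha : ∀ n, a n < s) (n : ℕ) :
    ∑ k ∈ Finset.range n, qsBeta q (a k) * cylLength q a k + cylLength q a n ≤ 1 := by
  induction n with
  | zero => simp [cylLength]
  | succ n ih =>
    calc _ = ∑ k ∈ Finset.range n, qsBeta q (a k) * cylLength q a k +
            (qsBeta q (a n) + q (a n)) * cylLength q a n := by
          rw [Finset.sum_range_succ, cylLength_succ]; ring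
      _ ≤ ∑ k ∈ Finset.range n, qsBeta q (a k) * cylLength q a k + cylLength q a n := by
          gcongr
          exact mul_le_of_le_one_left (h.cylLength_pos ha n).le (h.qsBeta_add_le_one (ha n))
      _ ≤ 1 := ih

lemma sum_range_qsVal_term_le_one (h : IsQsWeights s q) (ha : ∀ n, a n < s) (n : ℕ) :
    ∑ k ∈ Finset.range n, qsBeta q (a k) * cylLength q a k ≤ 1 := by
  linarith [h.sum_range_qsVal_term_add_cylLength_le_one ha n, h.cylLength_pos ha n]

lemma summable_qsVal (h : IsQsWeights s q) (ha : ∀ n, a n < s) :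
    Summable fun k => qsBeta q (a k) * cylLength q a k :=
  summable_of_sum_range_le (h.qsVal_term_nonneg ha) (h.sum_range_qsVal_term_le_one ha)

lemma qsVal_nonneg (h : IsQsWeights s q) (ha : ∀ n, a n < s) : 0 ≤ qsVal q a :=
  tsum_nonneg (h.qsVal_term_nonneg ha)

lemma qsVal_le_one (h : IsQsWeights s q) (ha : ∀ n, a n < s) : qsVal q a ≤ 1 :=
  Real.tsum_le_of_sum_range_le (h.qsVal_term_nonneg ha) (h.sum_range_qsVal_term_le_one ha)

lemma qsVal_eq_add_mul_qsVal_tail (h : IsQsWeights s q) (ha : ∀ n, a n < s) :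
    qsVal q a = qsBeta q (a 0) + q (a 0) * qsVal q fun k => a (k + 1) := by
  have first_term : qsBeta q (a 0) * cylLength q a 0 = qsBeta q (a 0) := by simp [cylLength]
  calc qsVal q a = qsBeta q (a 0) * cylLength q a 0 +
        ∑' k, qsBeta q (a (k + 1)) * cylLength q a (k + 1) := (h.summable_qsVal ha).tsum_eq_zero_add
    _ = qsBeta q (a 0) +
        ∑' k, q (a 0) * (qsBeta q (a (k + 1)) * cylLength q (fun k => a (k + 1)) k) := by
      simp only [first_term, cylLength_succ', mul_left_comm]
    _ = qsBeta q (a 0) + q (a 0) * qsVal q fun k => a (k + 1) := by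
      rw [_root_.tsum_mul_left]
      rfl

lemma qsVal_sub_qsVal_eq_cylLength_mul (h : IsQsWeights s q) (ha : ∀ n, a n < s)
    (hb : ∀ n, b n < s) (hab : ∀ i < n, a i = b i) :
    qsVal q a - qsVal q b =
      cylLength q a n * (qsVal q (fun k => a (k + n)) - qsVal q fun k => b (k + n)) := by
  induction n generalizing a b with
  | zero => simp [cylLength]
  | succ n ih =>
    have tail_eq := ih (fun k => ha (k + 1)) (fun k => hb (k + 1))
      fun i hi => hab (i + 1) (by omega)
    rw [h.qsVal_eq_add_mul_qsVal_tail ha, h.qsVal_eq_add_mul_qsVal_tail hb, ← hab 0 n.succ_pos,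
      add_sub_add_left_eq_sub, ← mul_sub, tail_eq, cylLength_succ', mul_assoc]
    rfl

lemma abs_qsVal_sub_le_cylLength (h : IsQsWeights s q) (ha : ∀ n, a n < s) (hb : ∀ n, b n < s)
    (hab : ∀ i < n, a i = b i) : |qsVal q a - qsVal q b| ≤ cylLength q a n := by
  rw [h.qsVal_sub_qsVal_eq_cylLength_mul ha hb hab, abs_mul, abs_of_pos (h.cylLength_pos ha n)]
  refine mul_le_of_le_one_right (h.cylLength_pos ha n).le ?_
  exact abs_sub_le_of_nonneg_of_le (h.qsVal_nonneg fun _ => ha _) (h.qsVal_le_one fun _ => ha _)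
    (h.qsVal_nonneg fun _ => hb _) (h.qsVal_le_one fun _ => hb _)

lemma cylLength_mul_qsVal_tail_le_sub (h : IsQsWeights s q) (ha : ∀ n, a n < s)
    (hb : ∀ n, b n < s) (hab : ∀ i < n, a i = b i) (hlt : a n < b n) :
    cylLength q b (n + 1) * qsVal q (fun k => b (k + 1 + n)) ≤ qsVal q b - qsVal q a := by
  have hdigit : qsBeta q (a n) + q (a n) ≤ qsBeta q (b n) := h.qsBeta_add_le hlt (hb n).le
  have htail : q (a n) * qsVal q (fun k => a (k + 1 + n)) ≤ q (a n) :=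
    mul_le_of_le_one_right (h.pos _ (ha n)).le (h.qsVal_le_one fun _ => ha _)
  rw [h.qsVal_sub_qsVal_eq_cylLength_mul hb ha fun i hi => (hab i hi).symm, cylLength_succ,
    mul_assoc, h.qsVal_eq_add_mul_qsVal_tail (a := fun k => a (k + n)) fun _ => ha _,
    h.qsVal_eq_add_mul_qsVal_tail (a := fun k => b (k + n)) fun _ => hb _]
  simp only [zero_add]
  gcongr
  · exact (h.cylLength_pos hb n).le
  · linarith

lemma pow_succ_le_qsVal (h : IsQsWeights s q) (ha : ∀ n, a n < s) (hδ : 0 ≤ δ)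
    (hqδ : ∀ i < s, δ ≤ q i) (hk : a k ≠ 0) : δ ^ (k + 1) ≤ qsVal q a := by
  have hbeta : δ ≤ qsBeta q (a k) := by
    have hfirst := h.qsBeta_add_le (Nat.pos_of_ne_zero hk) (ha k).le
    have hδ₀ := hqδ 0 (Nat.zero_lt_of_lt (ha k))
    simp only [qsBeta, Finset.range_zero, Finset.sum_empty, zero_add] at hfirst
    exact hδ₀.trans hfirst
  calc δ ^ (k + 1) = δ * δ ^ k := pow_succ' δ k
    _ ≤ qsBeta q (a k) * cylLength q a k := by
      gcongr
      · exact hδ.trans hbeta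
      · exact pow_le_cylLength hδ fun n => hqδ _ (ha n)
    _ ≤ qsVal q a := (h.summable_qsVal ha).le_tsum k fun j _ => h.qsVal_term_nonneg ha j

lemma exists_digit (h : IsQsWeights s q) {x : ℝ} (hx : x ∈ Set.Ico (0 : ℝ) 1) :
    ∃ d < s, ∃ y ∈ Set.Ico (0 : ℝ) 1, x = qsBeta q d + q d * y := by
  classical
  have hex : ∃ d, x < qsBeta q d := ⟨s, hx.2.trans_eq h.sum_eq_one.symm⟩
  obtain ⟨d, hd⟩ : ∃ d, Nat.find hex = d + 1 := by
    refine Nat.exists_eq_succ_of_ne_zero fun h0 => hx.1.not_gt ?_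
    have hfind := Nat.find_spec hex
    rwa [h0, qsBeta, Finset.sum_range_zero] at hfind
  have hds : d < s := by
    have : Nat.find hex ≤ s := Nat.find_min' hex (hx.2.trans_eq h.sum_eq_one.symm)
    omega
  have hlow : qsBeta q d ≤ x := not_lt.1 (Nat.find_min hex (m := d) (by omega))
  have hupp : x < qsBeta q d + q d := by
    have hfind := Nat.find_spec hex
    rwa [hd, qsBeta, Finset.sum_range_succ] at hfind
  have hqd := h.pos d hds
  refine ⟨d, hds, (x - qsBeta q d) / q d, ⟨div_nonneg (sub_nonneg.2 hlow) hqd.le, ?_⟩, ?_⟩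
  · rw [div_lt_one hqd]; linarith
  · rw [mul_div_cancel₀ _ hqd.ne']; ring

lemma exists_qsVal_eq (h : IsQsWeights s q) (hρ : ρ < 1) (hqρ : ∀ i < s, q i ≤ ρ) {x : ℝ}
    (hx : x ∈ Set.Ico (0 : ℝ) 1) : ∃ a : ℕ → ℕ, (∀ n, a n < s) ∧ qsVal q a = x := by
  have hdigit : ∀ x : Set.Ico (0 : ℝ) 1, ∃ d < s, ∃ y : Set.Ico (0 : ℝ) 1,
      (x : ℝ) = qsBeta q d + q d * y := fun x => by simpa using h.exists_digit x.2
  choose digit digit_lt rest eq_add using hdigit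
  have hρ₀ : 0 ≤ ρ := (h.pos _ (digit_lt ⟨x, hx⟩)).le.trans (hqρ _ (digit_lt _))
  let expansion (x : Set.Ico (0 : ℝ) 1) (n : ℕ) : ℕ := digit (rest^[n] x)
  have expansion_lt (x n) : expansion x n < s := digit_lt _
  have sub_eq_mul (x) : qsVal q (expansion x) - x =
      q (digit x) * (qsVal q (expansion (rest x)) - rest x) := by
    calc qsVal q (expansion x) - x
        = qsBeta q (digit x) + q (digit x) * qsVal q (expansion (rest x)) -
            (qsBeta q (digit x) + q (digit x) * rest x) :=
          congrArg₂ (· - ·) (h.qsVal_eq_add_mul_qsVal_tail (expansion_lt x)) (eq_add x)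
      _ = q (digit x) * (qsVal q (expansion (rest x)) - rest x) := by ring
  have approx (n : ℕ) (x : Set.Ico (0 : ℝ) 1) : |qsVal q (expansion x) - x| ≤ ρ ^ n := by
    induction n generalizing x with
    | zero =>
      rw [pow_zero]
      exact abs_sub_le_of_nonneg_of_le (h.qsVal_nonneg (expansion_lt x))
        (h.qsVal_le_one (expansion_lt x)) x.2.1 x.2.2.le
    | succ n ih =>
      rw [sub_eq_mul, abs_mul, abs_of_pos (h.pos _ (digit_lt x)), pow_succ']
      gcongr
      exacts [hqρ _ (digit_lt x), ih _]
  refine ⟨expansion ⟨x, hx⟩, expansion_lt _, ?_⟩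
  exact sub_eq_zero.1 <| abs_nonpos_iff.1 <|
    ge_of_tendsto' (tendsto_pow_atTop_nhds_zero_of_lt_one hρ₀ hρ) fun n => approx n ⟨x, hx⟩

lemma pow_mul_cylLength_le_sub_interleave (h : IsQsWeights s q) (ha : ∀ n, a n < s)
    (hb : ∀ n, b n < s) (hc : ∀ n, c n < s) (hc₀ : ∀ n, c n ≠ 0 ∨ c (n + 1) ≠ 0) (hδ : 0 ≤ δ)
    (hqδ : ∀ i < s, δ ≤ q i) (hab : ∀ i < N, interleave K c a i = interleave K c b i)
    (hlt : interleave K c a N < interleave K c b N) :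
    δ ^ (2 * K + 3) * cylLength q (interleave K c b) N ≤
      qsVal q (interleave K c b) - qsVal q (interleave K c a) := by
  set b' := interleave K c b
  have hb' : ∀ n, b' n < s := interleave_mem (A := Set.Iio s) hc hb
  have hδ₁ : δ ≤ 1 := (hqδ _ (ha 0)).trans (h.le_one (ha 0))
  have htail : δ ^ (2 * K + 2) ≤ qsVal q fun k => b' (k + 1 + N) := by
    obtain ⟨k, hk, hne⟩ := exists_interleave_ne_zero (K := K) hc₀ b (N + 1)
    calc δ ^ (2 * K + 2) ≤ δ ^ (k + 1) := pow_le_pow_of_le_one hδ hδ₁ (by omega)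
      _ ≤ qsVal q fun k => b' (k + 1 + N) :=
        h.pow_succ_le_qsVal (fun n => hb' _) hδ hqδ (by rwa [add_assoc, add_comm 1 N])
  have hcyl : cylLength q b' N * δ ≤ cylLength q b' (N + 1) := by
    rw [cylLength_succ]
    exact mul_le_mul_of_nonneg_left (hqδ _ (hb' N)) (h.cylLength_pos hb' N).le
  calc δ ^ (2 * K + 3) * cylLength q b' N = cylLength q b' N * δ * δ ^ (2 * K + 2) := by ring
    _ ≤ cylLength q b' (N + 1) * qsVal q fun k => b' (k + 1 + N) :=
      mul_le_mul hcyl htail (by positivity) (h.cylLength_pos hb' _).le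
    _ ≤ qsVal q b' - qsVal q (interleave K c a) :=
      h.cylLength_mul_qsVal_tail_le_sub (interleave_mem (A := Set.Iio s) hc ha) hb' hab hlt

lemma abs_qsVal_sub_le_rpow (h : IsQsWeights s q) (ha : ∀ n, a n < s) (hb : ∀ n, b n < s)
    (hc : ∀ n, c n < s) (hc₀ : ∀ n, c n ≠ 0 ∨ c (n + 1) ≠ 0) (hδ : 0 < δ) (hρ : ρ ≤ 1)
    (hqδρ : ∀ i < s, q i ∈ Set.Icc δ ρ) (hr₀ : 0 ≤ r) (hr₁ : r ≤ 1) (hK₀ : 0 < K)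
    (hK : (ρ ^ K) ^ (1 - r) ≤ δ ^ r) :
    |qsVal q a - qsVal q b| ≤
      (|qsVal q (interleave K c a) - qsVal q (interleave K c b)| / δ ^ (2 * K + 3)) ^ r := by
  rcases eq_or_ne a b with rfl | hne
  · rw [sub_self, abs_zero]
    positivity
  wlog hlt : a (PiNat.firstDiff a b) < b (PiNat.firstDiff a b) generalizing a b
  · rw [abs_sub_comm, abs_sub_comm (qsVal q (interleave K c a))]
    refine this hb ha hne.symm ?_
    rw [PiNat.firstDiff_comm]
    exact (PiNat.apply_firstDiff_ne hne).lt_or_gt.resolve_left hlt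
  have hab : ∀ i < PiNat.firstDiff a b, a i = b i := fun i => PiNat.apply_eq_of_lt_firstDiff
  obtain ⟨J, t, ht, hn⟩ : ∃ J t, t < K ∧ PiNat.firstDiff a b = J * K + t :=
    ⟨_ / K, _ % K, Nat.mod_lt _ hK₀, (Nat.div_add_mod' _ _).symm⟩
  rw [hn] at hab hlt
  have separation := h.pow_mul_cylLength_le_sub_interleave (N := J * (K + 1) + t) ha hb hc hc₀
    hδ.le (fun i hi => (hqδρ i hi).1) (interleave_congr c ht hab)
    (by simpa only [interleave_mul_add _ _ _ ht] using hlt)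
  calc |qsVal q a - qsVal q b| = |qsVal q b - qsVal q a| := abs_sub_comm _ _
    _ ≤ cylLength q b (J * K + t) :=
      h.abs_qsVal_sub_le_cylLength hb ha fun i hi => (hab i hi).symm
    _ ≤ cylLength q (interleave K c b) (J * (K + 1) + t) ^ r :=
      cylLength_le_cylLength_interleave_rpow (fun n => ⟨h.pos _ (hb n), (hqδρ _ (hb n)).2⟩)
        (fun n => (hqδρ _ (hc n)).1) hδ.le hρ hr₀ hr₁ hK J ht.le
    _ ≤ (|qsVal q (interleave K c a) - qsVal q (interleave K c b)| / δ ^ (2 * K + 3)) ^ r := by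
      gcongr
      · exact (h.cylLength_pos (interleave_mem (A := Set.Iio s) hc hb) _).le
      rw [le_div_iff₀' (by positivity), abs_sub_comm]
      exact separation.trans (le_abs_self _)

lemma dimH_qsVal_image_digitMeanSeqs_le (h : IsQsWeights s q) (hs : 2 ≤ s) {r : ℝ≥0} (hr₀ : 0 < r)
    (hr₁ : r < 1) : dimH (qsVal q '' digitMeanSeqs s) ≤ dimH (Sset s q) / r := by
  obtain ⟨δ, hδ, ρ, hρ, hqδρ⟩ := h.exists_forall_mem_Icc hs
  have hρ₀ : 0 ≤ ρ := (h.pos 0 (by omega)).le.trans (hqδρ 0 (by omega)).2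
  obtain ⟨K, hK₀, hK⟩ := exists_pow_rpow_le (p := 1 - r) (ε := δ ^ (r : ℝ)) hρ₀ hρ
    (by simpa using hr₁) (by positivity)
  have hc : ∀ n, markerDigits n < s := fun n => (markerDigits_lt_two n).trans_le hs
  let C : ℝ≥0 := (δ ^ (2 * K + 3))⁻¹.toNNReal ^ (r : ℝ)
  have holder : ∀ a ∈ digitMeanSeqs s, ∀ b ∈ digitMeanSeqs s,
      edist (qsVal q a) (qsVal q b) ≤ C * edist (qsVal q (interleave K markerDigits a))
        (qsVal q (interleave K markerDigits b)) ^ (r : ℝ) := by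
    rintro a ⟨ha, -⟩ b ⟨hb, -⟩
    have hdist := h.abs_qsVal_sub_le_rpow ha hb hc markerDigits_ne_zero_or_succ_ne_zero hδ hρ.le
      hqδρ r.coe_nonneg (by exact_mod_cast hr₁.le) hK₀ hK
    rw [div_eq_inv_mul, Real.mul_rpow (by positivity) (abs_nonneg _), ← Real.dist_eq,
      ← Real.dist_eq] at hdist
    rw [edist_nndist, edist_nndist, ← ENNReal.coe_rpow_of_nonneg _ r.coe_nonneg,
      ← ENNReal.coe_mul, ENNReal.coe_le_coe, ← NNReal.coe_le_coe]
    simpa [C, hδ.le] using hdist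
  refine (dimH_image_le_of_edist_le hr₀ holder).trans ?_
  gcongr
  rintro _ ⟨a, ⟨ha, hmean⟩, rfl⟩
  have no_mean : ¬ HasDigitMean (interleave K markerDigits a) := fun hmean' =>
    not_hasDigitMean_markerDigits (hmean'.of_interleave hK₀ hmean)
  exact ⟨_, interleave_mem (A := Set.Iio s) hc ha, rfl, no_mean⟩

lemma Ico_subset_qsVal_image_union_Sset (h : IsQsWeights s q) (hs : 2 ≤ s) :
    Set.Ico 0 1 ⊆ qsVal q '' digitMeanSeqs s ∪ Sset s q := by
  intro x hx
  obtain ⟨_, -, ρ, hρ, hq⟩ := h.exists_forall_mem_Icc hs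
  obtain ⟨a, ha, rfl⟩ := h.exists_qsVal_eq hρ (fun i hi => (hq i hi).2) hx
  by_cases hmean : HasDigitMean a
  · exact .inl ⟨a, ⟨ha, hmean⟩, rfl⟩
  · exact .inr ⟨a, ha, rfl, hmean⟩

lemma coe_le_dimH_Sset (h : IsQsWeights s q) (hs : 2 ≤ s) {r : ℝ≥0} (hr₁ : r < 1) :
    r ≤ dimH (Sset s q) := by
  rcases eq_zero_or_pos r with rfl | hr₀
  · simp
  have one_le_max : 1 ≤ max (dimH (qsVal q '' digitMeanSeqs s)) (dimH (Sset s q)) := by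
    have hIco : dimH (Set.Ico (0 : ℝ) 1) = 1 := by
      simp [Real.dimH_of_nonempty_interior (s := Set.Ico (0 : ℝ) 1)]
    rw [← dimH_union, ← hIco]
    exact dimH_mono (h.Ico_subset_qsVal_image_union_Sset hs)
  rcases le_max_iff.1 one_le_max with hE | hS
  · have one_le_div := hE.trans (h.dimH_qsVal_image_digitMeanSeqs_le hs hr₀ hr₁)
    rwa [ENNReal.le_div_iff_mul_le (.inl (by exact_mod_cast hr₀.ne')) (.inl ENNReal.coe_ne_top),
      one_mul] at one_le_div
  · exact (ENNReal.coe_le_one_iff.2 hr₁.le).trans hS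

end IsQsWeights

/-- The set `S` is superfractal: its Hausdorff–Besicovitch dimension equals `1`. -/
theorem Sset_dimH_eq_one (s : ℕ) (hs : 2 ≤ s) (q : ℕ → ℝ)
    (hq : ∀ i < s, 0 < q i) (hsum : ∑ i ∈ Finset.range s, q i = 1) :
    dimH (Sset s q) = 1 := by
  have h : IsQsWeights s q := ⟨hq, hsum⟩
  refine le_antisymm ((dimH_mono (Set.subset_univ _)).trans_eq Real.dimH_univ) ?_
  exact ENNReal.le_of_forall_nnreal_lt fun r hr =>
    h.coe_le_dimH_Sset hs (ENNReal.coe_lt_one_iff.1 hr)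
end

section
/- The Hausdorff–Besicovitch dimension of the set M_0 is at least 0.87, i.e. dimH(M_0) ≥ 0.87. -/
open Filter

/-- The value of a ternary digit sequence: `val₃(a) = ∑_{k≥0} a k · 3^{-(k+1)}`. -/
noncomputable def val3 (a : ℕ → ℕ) : ℝ :=
  ∑' k : ℕ, (a k : ℝ) / 3 ^ (k + 1)

/-- For `i ∈ {0,1,2}`, `Mset i` is the set of values of ternary digit sequences for which
the asymptotic mean of digits and the frequency of the digit `i` both exist and are
equal. -/
noncomputable def Mset (i : ℕ) : Set ℝ :=
  {x | ∃ a : ℕ → ℕ, (∀ n, a n < 3) ∧ x = val3 a ∧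
    ∃ L : ℝ,
      Filter.Tendsto (fun n => (∑ k ∈ Finset.range n, (a k : ℝ)) / n)
        Filter.atTop (nhds L) ∧
      Filter.Tendsto
        (fun n => (((Finset.range n).filter (fun j => a j = i)).card : ℝ) / n)
        Filter.atTop (nhds L)}

/-!
Draw ternary digits independently with probabilities `(7/12, 1/4, 1/6)`. The mean digit is
`1/4 + 2 * (1/6) = 7/12`, the probability of the digit `0`, so by the strong law of large numbers
almost every sequence has its value in `Mset 0`. The strong law applied to the logarithms of the
digit probabilities shows that the measure of the `n`-th cylinder around almost every sequence
decays like `exp (-n * H)`, where `H` is the entropy of the digit distribution. A set of diameter at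
most `3⁻ⁿ` meets at most three cylinders of order `n`, so the image measure satisfies Frostman's
condition with every exponent below `H / log 3` on a set of positive measure (Billingsley's
argument), whence `dimH (Mset 0) ≥ H / log 3 ≈ 0.8735`. The weights are a rational approximation of
those maximizing the entropy under the constraint `p₀ = p₁ + 2 * p₂`.
-/

open MeasureTheory ProbabilityTheory Topology
open scoped ENNReal NNReal

section MassDistribution

lemma exists_pow_succ_lt_and_le_pow {r d : ℝ≥0∞} (hr : r < 1) (hd : d ≠ 0) {N : ℕ}
    (hdN : d ≤ r ^ N) : ∃ n ≥ N, r ^ (n + 1) < d ∧ d ≤ r ^ n := by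
  have hsmall : ∃ n, r ^ n < d :=
    ((ENNReal.tendsto_pow_atTop_nhds_zero_of_lt_one hr).eventually_lt_const
      (pos_iff_ne_zero.2 hd)).exists
  have hlt : ∀ m ≤ N, ¬ r ^ m < d := fun m hm =>
    (hdN.trans (pow_le_pow_right_of_le_one' hr.le hm)).not_gt
  obtain ⟨n, hn⟩ : ∃ n, Nat.find hsmall = n + 1 :=
    Nat.exists_eq_succ_of_ne_zero fun h0 => hlt 0 N.zero_le (h0 ▸ Nat.find_spec hsmall)
  refine ⟨n, ?_, hn ▸ Nat.find_spec hsmall, not_lt.1 (Nat.find_min hsmall (by omega))⟩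
  by_contra! hnN
  exact hlt (n + 1) hnN (hn ▸ Nat.find_spec hsmall)

lemma le_div_rpow_mul_rpow_of_forall_le_pow {r C d m : ℝ≥0∞} {s : ℝ≥0} {N : ℕ} (hr0 : r ≠ 0)
    (hr1 : r < 1) (hC : C ≠ ∞) (h : ∀ n ≥ N, d ≤ r ^ n → m ≤ C * (r ^ n) ^ (s : ℝ))
    (hdN : d ≤ r ^ N) : m ≤ C / r ^ (s : ℝ) * d ^ (s : ℝ) := by
  rcases eq_or_ne d 0 with rfl | hd
  · have hlim : Tendsto (fun n => C * (r ^ n) ^ (s : ℝ)) atTop (𝓝 (C * 0 ^ (s : ℝ))) :=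
      ENNReal.Tendsto.const_mul ((ENNReal.continuous_rpow_const.tendsto 0).comp
        (ENNReal.tendsto_pow_atTop_nhds_zero_of_lt_one hr1)) (Or.inr hC)
    have hC_le : C ≤ C / r ^ (s : ℝ) :=
      ENNReal.le_div_iff_mul_le (by simp [hr0, hr1.ne_top]) (by simp [hr0, hr1.ne_top]) |>.2
        (mul_le_of_le_one_right' (ENNReal.rpow_le_one hr1.le s.coe_nonneg))
    calc m ≤ C * 0 ^ (s : ℝ) :=
          ge_of_tendsto hlim ((eventually_ge_atTop N).mono fun n hn => h n hn zero_le)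
      _ ≤ C / r ^ (s : ℝ) * 0 ^ (s : ℝ) := by gcongr
  · obtain ⟨n, hn, hlt, hle⟩ := exists_pow_succ_lt_and_le_pow hr1 hd hdN
    have hrs0 : r ^ (s : ℝ) ≠ 0 := by simp [hr0, hr1.ne_top]
    have hrs : r ^ (s : ℝ) ≠ ∞ := by simp [hr0, hr1.ne_top]
    calc m ≤ C * (r ^ n) ^ (s : ℝ) := h n hn hle
      _ = C / r ^ (s : ℝ) * (r ^ (n + 1)) ^ (s : ℝ) := by
          rw [pow_succ', ENNReal.mul_rpow_of_nonneg _ _ s.coe_nonneg, ← mul_assoc,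
            ENNReal.div_mul_cancel hrs0 hrs]
      _ ≤ C / r ^ (s : ℝ) * d ^ (s : ℝ) := by gcongr

variable {X : Type*} [EMetricSpace X] [MeasurableSpace X] [BorelSpace X] {μ : Measure X}
  {s : ℝ≥0} {C : ℝ≥0∞} {A : Set X}

theorem le_dimH_of_measure_le_mul_ediam_rpow {ε : ℝ≥0∞} (hC : C ≠ ∞) (hε : 0 < ε)
    (h : ∀ t, IsClosed t → Metric.ediam t ≤ ε → μ t ≤ C * Metric.ediam t ^ (s : ℝ))
    (hA : μ A ≠ 0) : s ≤ dimH A := by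
  have hμ : C⁻¹ • μ ≤ μH[s] := by
    refine Measure.le_hausdorffMeasure _ _ ε hε fun t ht => ?_
    rw [← Metric.ediam_closure] at ht ⊢
    calc (C⁻¹ • μ) t ≤ (C⁻¹ • μ) (closure t) := measure_mono subset_closure
      _ = μ (closure t) / C := by
          rw [Measure.smul_apply, smul_eq_mul, mul_comm, div_eq_mul_inv]
      _ ≤ Metric.ediam (closure t) ^ (s : ℝ) :=
          ENNReal.div_le_of_le_mul' (h _ isClosed_closure ht)
  refine le_dimH_of_hausdorffMeasure_ne_zero (ne_bot_of_le_ne_bot ?_ (hμ A))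
  simp [hA, hC]

theorem le_dimH_of_measure_le_mul_pow_rpow {r : ℝ≥0∞} {N : ℕ} (hr0 : r ≠ 0) (hr1 : r < 1)
    (hC : C ≠ ∞) (h : ∀ n ≥ N, ∀ t, IsClosed t → Metric.ediam t ≤ r ^ n →
      μ t ≤ C * (r ^ n) ^ (s : ℝ))
    (hA : μ A ≠ 0) : s ≤ dimH A :=
  le_dimH_of_measure_le_mul_ediam_rpow (ENNReal.div_ne_top hC (by simp [hr0, hr1.ne_top]))
    (ENNReal.pow_pos (pos_iff_ne_zero.2 hr0) N)
    (fun t ht => le_div_rpow_mul_rpow_of_forall_le_pow hr0 hr1 hC fun n hn => h n hn t ht) hA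

end MassDistribution

section Digits

variable {b : ℕ}

/-- The integer whose base `b` expansion, most significant digit first, is `ω 0, …, ω (n - 1)`. It
labels the `b`-adic interval of length `b⁻ⁿ` containing `Real.ofDigits ω`. `PiNat.res` lists the
digits in reverse order, which is the order `Nat.ofDigits` expects. -/
def digitPrefix (ω : ℕ → Fin b) (n : ℕ) : ℕ :=
  Nat.ofDigits b (PiNat.res (fun i => (ω i : ℕ)) n)

lemma digitPrefix_succ (ω : ℕ → Fin b) (n : ℕ) :
    digitPrefix ω (n + 1) = ω n + b * digitPrefix ω n := by
  simp [digitPrefix, Nat.ofDigits_cons]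

lemma mem_cylinder_of_digitPrefix_eq {ω ω' : ℕ → Fin b} {n : ℕ}
    (h : digitPrefix ω n = digitPrefix ω' n) : ω ∈ PiNat.cylinder ω' n := by
  induction n with
  | zero => simp
  | succ n ih =>
    have hb : 0 < b := (ω 0).pos
    rw [digitPrefix_succ, digitPrefix_succ] at h
    have hdigit : (ω n : ℕ) = ω' n := by
      simpa [Nat.mod_eq_of_lt (ω _).2, Nat.mod_eq_of_lt (ω' _).2] using congrArg (· % b) h
    have hprefix : digitPrefix ω n = digitPrefix ω' n :=
      Nat.eq_of_mul_eq_mul_left hb (by omega)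
    intro i hi
    rcases Nat.lt_succ_iff_lt_or_eq.1 hi with hi | rfl
    exacts [ih hprefix i hi, Fin.ext hdigit]

lemma pow_mul_ofDigits (ω : ℕ → Fin b) (n : ℕ) :
    (b : ℝ) ^ n * Real.ofDigits ω = digitPrefix ω n + Real.ofDigits fun i => ω (i + n) := by
  have hb : (b : ℝ) ≠ 0 := mod_cast (ω 0).pos.ne'
  have hsum : (b : ℝ) ^ n * ∑ i ∈ Finset.range n, Real.ofDigitsTerm ω i = digitPrefix ω n := by
    induction n with
    | zero => simp [digitPrefix]
    | succ n ih =>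
      rw [Finset.sum_range_succ, mul_add, pow_succ', mul_assoc, ih, digitPrefix_succ,
        Real.ofDigitsTerm]
      push_cast
      field_simp
      ring
  rw [Real.ofDigits_eq_sum_add_ofDigits ω n, mul_add, hsum, mul_inv_cancel_left₀ (by positivity)]

lemma digitPrefix_le_add_two {ω ω' : ℕ → Fin b} {n : ℕ}
    (h : dist (Real.ofDigits ω) (Real.ofDigits ω') ≤ ((b : ℝ) ^ n)⁻¹) :
    digitPrefix ω n ≤ digitPrefix ω' n + 2 := by
  have hbn : 0 < (b : ℝ) ^ n := pow_pos (mod_cast (ω 0).pos) n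
  have hdiff : (b : ℝ) ^ n * (Real.ofDigits ω - Real.ofDigits ω') ≤ 1 := by
    rw [← mul_inv_cancel₀ hbn.ne']
    gcongr
    exact (le_abs_self _).trans h
  have hω := pow_mul_ofDigits ω n
  have hω' := pow_mul_ofDigits ω' n
  have hnonneg := Real.ofDigits_nonneg fun i => ω (i + n)
  have hle_one := Real.ofDigits_le_one fun i => ω' (i + n)
  exact_mod_cast (by linarith : (digitPrefix ω n : ℝ) ≤ digitPrefix ω' n + 2)

variable {ν : Measure (ℕ → Fin b)}

lemma measure_digitPrefix_fiber_inter_le {E : Set (ℕ → Fin b)} {n : ℕ} {ε : ℝ≥0∞}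
    (hE : ∀ ω ∈ E, ν (PiNat.cylinder ω n) ≤ ε) (m : ℕ) :
    ν ({ω | digitPrefix ω n = m} ∩ E) ≤ ε := by
  rcases ({ω | digitPrefix ω n = m} ∩ E).eq_empty_or_nonempty with hempty | ⟨ω', hω', hω'E⟩
  · simp [hempty]
  · exact (measure_mono fun ω hω => mem_cylinder_of_digitPrefix_eq (hω.1.trans hω'.symm)).trans
      (hE ω' hω'E)

lemma measure_preimage_ofDigits_inter_le {E : Set (ℕ → Fin b)} {t : Set ℝ} {n : ℕ} {ε : ℝ≥0∞}
    (hE : ∀ ω ∈ E, ν (PiNat.cylinder ω n) ≤ ε) (ht : Metric.ediam t ≤ (b : ℝ≥0∞)⁻¹ ^ n) :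
    ν (Real.ofDigits ⁻¹' t ∩ E) ≤ 3 * ε := by
  rcases (Real.ofDigits (b := b) ⁻¹' t).eq_empty_or_nonempty with hempty | hne
  · simp [hempty]
  obtain ⟨ω₀, hω₀, hmin⟩ := exists_minimalFor_of_wellFoundedLT
    (fun ω : ℕ → Fin b => Real.ofDigits ω ∈ t) (digitPrefix · n) hne
  have hcover : Real.ofDigits ⁻¹' t ∩ E ⊆
      ⋃ j ∈ Finset.range 3, {ω | digitPrefix ω n = digitPrefix ω₀ n + j} ∩ E := by
    rintro ω ⟨hω, hωE⟩
    have hdist : dist (Real.ofDigits ω) (Real.ofDigits ω₀) ≤ ((b : ℝ) ^ n)⁻¹ := by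
      have hedist := (Metric.edist_le_ediam_of_mem (s := t) hω hω₀).trans ht
      rw [dist_edist]
      simpa using ENNReal.toReal_mono (by simp [(ω 0).pos.ne']) hedist
    have hle := digitPrefix_le_add_two hdist
    have hge : digitPrefix ω₀ n ≤ digitPrefix ω n := (le_total _ _).elim id (hmin hω)
    simp only [Set.mem_iUnion]
    exact ⟨digitPrefix ω n - digitPrefix ω₀ n, by simp; omega, by simp; omega, hωE⟩
  calc ν (Real.ofDigits ⁻¹' t ∩ E)
      ≤ ∑ j ∈ Finset.range 3, ν ({ω | digitPrefix ω n = digitPrefix ω₀ n + j} ∩ E) :=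
        (measure_mono hcover).trans (measure_biUnion_finset_le _ _)
    _ ≤ ∑ _j ∈ Finset.range 3, ε :=
        Finset.sum_le_sum fun j _ => measure_digitPrefix_fiber_inter_le hE _
    _ = 3 * ε := by simp

theorem le_dimH_of_measure_cylinder_le (hb : 1 < b) {s : ℝ≥0} {A : Set ℝ}
    (h : ∃ᵐ ω ∂ν, Real.ofDigits ω ∈ A ∧
      ∀ᶠ n in atTop, ν (PiNat.cylinder ω n) ≤ ((b : ℝ≥0∞)⁻¹ ^ n) ^ (s : ℝ)) :
    s ≤ dimH A := by
  let E (k : ℕ) : Set (ℕ → Fin b) := {ω | Real.ofDigits ω ∈ A ∧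
    ∀ n ≥ k, ν (PiNat.cylinder ω n) ≤ ((b : ℝ≥0∞)⁻¹ ^ n) ^ (s : ℝ)}
  have hE : ν (⋃ k, E k) ≠ 0 := by
    convert frequently_ae_iff.1 h using 2
    ext ω
    simp [E, eventually_atTop]
  obtain ⟨k, hk⟩ := exists_measure_pos_of_not_measure_iUnion_null hE
  have hmeas : Measurable (Real.ofDigits (b := b)) := Real.continuous_ofDigits.measurable
  refine le_dimH_of_measure_le_mul_pow_rpow (μ := (ν.restrict (E k)).map Real.ofDigits)
    (C := 3) (N := k) (r := (b : ℝ≥0∞)⁻¹) (by simp) (by simpa using hb) (by simp) ?_ ?_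
  · intro n hn t ht htn
    rw [Measure.map_apply hmeas ht.measurableSet, Measure.restrict_apply (hmeas ht.measurableSet)]
    exact measure_preimage_ofDigits_inter_le (fun ω hω => hω.2 n hn) htn
  · refine (hk.trans_le ?_).ne'
    calc ν (E k) = ν.restrict (E k) (E k) := (Measure.restrict_eq_self _ subset_rfl).symm
      _ ≤ ν.restrict (E k) (Real.ofDigits ⁻¹' A) := measure_mono fun ω hω => hω.1
      _ ≤ (ν.restrict (E k)).map Real.ofDigits A := Measure.le_map_apply hmeas.aemeasurable A

end Digits

section IIDSequences

lemma infinitePi_real_cylinder {α : ℕ → Type*} [∀ n, MeasurableSpace (α n)]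
    [∀ n, MeasurableSingletonClass (α n)] (P : ∀ n, Measure (α n)) [∀ n, IsProbabilityMeasure (P n)]
    (ω : ∀ n, α n) (n : ℕ) :
    (Measure.infinitePi P).real (PiNat.cylinder ω n) = ∏ i ∈ Finset.range n, (P i).real {ω i} := by
  simp only [PiNat.cylinder_eq_pi, measureReal_def, ← ENNReal.toReal_prod]
  rw [Measure.infinitePi_pi P fun i _ => measurableSet_singleton _]

theorem ae_tendsto_average_infinitePi {α : Type*} [MeasurableSpace α] (P : Measure α)
    [IsProbabilityMeasure P] {f : α → ℝ} (hf : Measurable f) (hint : Integrable f P) :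
    ∀ᵐ ω ∂Measure.infinitePi fun _ : ℕ => P,
      Tendsto (fun n : ℕ => (∑ i ∈ Finset.range n, f (ω i)) / n) atTop (𝓝 (∫ x, f x ∂P)) := by
  have hident (i : ℕ) : IdentDistrib (fun ω : ℕ → α => f (ω i)) f
      (Measure.infinitePi fun _ : ℕ => P) P :=
    ((measurePreserving_eval_infinitePi (fun _ : ℕ => P) i).hasLaw.identDistrib HasLaw.id).comp hf
  have hindep : iIndepFun (fun i ω => f (ω i)) (Measure.infinitePi fun _ : ℕ => P) :=
    iIndepFun_infinitePi (X := fun _ => f) fun _ => hf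
  have hmean : ∫ ω, f (ω 0) ∂(Measure.infinitePi fun _ : ℕ => P) = ∫ x, f x ∂P :=
    (hident 0).integral_eq
  rw [← hmean]
  have hint₀ : Integrable (fun ω : ℕ → α => f (ω 0)) (Measure.infinitePi fun _ : ℕ => P) :=
    (hident 0).integrable_iff.2 hint
  have hident₀ (i : ℕ) := (hident i).trans (hident 0).symm
  exact strong_law_ae_real (fun i (ω : ℕ → α) => f (ω i)) hint₀
    (fun i j hij => hindep.indepFun hij) hident₀

variable {α : Type*} [Fintype α] [MeasurableSpace α]

/-- The Shannon entropy, in nats, of a probability measure on a finite type. It is the almost sure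
exponential decay rate of the measure of cylinders under the infinite product of `P`. -/
noncomputable def shannonEntropy (P : Measure α) : ℝ :=
  ∑ x, Real.negMulLog (P.real {x})

variable [MeasurableSingletonClass α] (P : Measure α) [IsProbabilityMeasure P]

theorem ae_tendsto_neg_log_infinitePi_cylinder_div :
    ∀ᵐ ω ∂Measure.infinitePi fun _ : ℕ => P,
      Tendsto (fun n : ℕ => -Real.log ((Measure.infinitePi fun _ : ℕ => P).real
        (PiNat.cylinder ω n)) / n) atTop (𝓝 (shannonEntropy P)) := by
  have hmean : ∫ x, -Real.log (P.real {x}) ∂P = shannonEntropy P := by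
    rw [integral_fintype .of_finite]
    simp [shannonEntropy, Real.negMulLog]
  have hpos : ∀ᵐ ω ∂Measure.infinitePi fun _ : ℕ => P, ∀ i, P.real {ω i} ≠ 0 := by
    refine ae_all_iff.2 fun i =>
      (measurePreserving_eval_infinitePi (fun _ : ℕ => P) i).quasiMeasurePreserving.ae
        (p := fun x => P.real {x} ≠ 0) ?_
    exact (ae_iff_of_countable (μ := P)).2 fun x hx =>
      (measureReal_ne_zero_iff (measure_ne_top P _)).2 hx
  filter_upwards [ae_tendsto_average_infinitePi P (measurable_of_finite fun x =>
    -Real.log (P.real {x})) .of_finite, hpos] with ω hω hωpos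
  simpa only [infinitePi_real_cylinder, Real.log_prod fun i _ => hωpos i, Finset.sum_neg_distrib,
    hmean] using hω

end IIDSequences

lemma inv_natCast_pow_rpow_eq_ofReal_exp {b : ℕ} (hb : 0 < b) (s : ℝ) (n : ℕ) :
    ((b : ℝ≥0∞)⁻¹ ^ n) ^ s = ENNReal.ofReal (Real.exp (-(s * Real.log b * n))) := by
  have hbn : 0 < ((b : ℝ)⁻¹ ^ n) := by positivity
  have hcast : (b : ℝ≥0∞)⁻¹ ^ n = ENNReal.ofReal ((b : ℝ)⁻¹ ^ n) := by
    rw [ENNReal.ofReal_pow (by positivity), ENNReal.ofReal_inv_of_pos (by positivity),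
      ENNReal.ofReal_natCast]
  rw [hcast, ENNReal.ofReal_rpow_of_pos hbn, Real.rpow_def_of_pos hbn, Real.log_pow, Real.log_inv]
  ring_nf

theorem shannonEntropy_div_log_le_dimH {b : ℕ} (hb : 1 < b) (P : Measure (Fin b))
    [IsProbabilityMeasure P] {A : Set ℝ}
    (hA : ∀ᵐ ω ∂Measure.infinitePi fun _ : ℕ => P, Real.ofDigits ω ∈ A) :
    ENNReal.ofReal (shannonEntropy P / Real.log b) ≤ dimH A := by
  have hlog : 0 < Real.log b := Real.log_pos (mod_cast hb)
  refine ENNReal.le_of_forall_nnreal_lt fun s hs => ?_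
  have hs : s * Real.log b < shannonEntropy P := by
    rwa [ENNReal.lt_ofReal_iff_toReal_lt ENNReal.coe_ne_top, ENNReal.coe_toReal,
      lt_div_iff₀ hlog] at hs
  refine le_dimH_of_measure_cylinder_le (ν := Measure.infinitePi fun _ : ℕ => P) hb
    (Eventually.frequently ?_)
  filter_upwards [hA, ae_tendsto_neg_log_infinitePi_cylinder_div P] with ω hωA hω
  refine ⟨hωA, ?_⟩
  filter_upwards [hω.eventually_const_lt hs, eventually_gt_atTop 0] with n hn hn0
  rw [lt_div_iff₀ (mod_cast hn0)] at hn
  have hlt := Real.lt_exp_of_log_lt (lt_neg_of_lt_neg hn)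
  rw [inv_natCast_pow_rpow_eq_ofReal_exp (by omega), ← ofReal_measureReal]
  exact ENNReal.ofReal_le_ofReal hlt.le

section MeanEqualsFrequency

lemma val3_eq_ofDigits (ω : ℕ → Fin 3) : val3 (fun n => ω n) = Real.ofDigits ω := by
  simp [val3, Real.ofDigits, Real.ofDigitsTerm, div_eq_mul_inv]

variable {P : Measure (Fin 3)} [IsProbabilityMeasure P]

lemma ae_ofDigits_mem_Mset {i : Fin 3} (hi : ∫ j, (j : ℝ) ∂P = P.real {i}) :
    ∀ᵐ ω ∂Measure.infinitePi fun _ : ℕ => P, Real.ofDigits ω ∈ Mset i := by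
  filter_upwards [
    ae_tendsto_average_infinitePi P (measurable_of_finite fun j : Fin 3 => (j : ℝ)) .of_finite,
    ae_tendsto_average_infinitePi P (measurable_of_finite (Set.indicator {i} 1)) .of_finite]
    with ω hmean hfreq
  rw [integral_indicator_one (measurableSet_singleton i)] at hfreq
  refine ⟨fun n => ω n, fun n => (ω n).2, (val3_eq_ofDigits ω).symm, P.real {i}, hi ▸ hmean, ?_⟩
  simpa [Set.indicator_apply, Fin.val_inj] using hfreq

theorem shannonEntropy_div_log_three_le_dimH_Mset {i : Fin 3} (hi : ∫ j, (j : ℝ) ∂P = P.real {i}) :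
    ENNReal.ofReal (shannonEntropy P / Real.log 3) ≤ dimH (Mset i) :=
  mod_cast shannonEntropy_div_log_le_dimH (by norm_num) P (ae_ofDigits_mem_Mset hi)

end MeanEqualsFrequency

theorem exists_isProbabilityMeasure_real_singleton_eq {α : Type*} [Fintype α] [MeasurableSpace α]
    [MeasurableSingletonClass α] {q : α → ℝ} (hq : q ∈ stdSimplex ℝ α) :
    ∃ P : Measure α, IsProbabilityMeasure P ∧ ∀ x, P.real {x} = q x := by
  have hsum : ∑ x, ENNReal.ofReal (q x) = 1 := by
    rw [← ENNReal.ofReal_sum_of_nonneg fun x _ => hq.1 x, hq.2, ENNReal.ofReal_one]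
  refine ⟨(PMF.ofFintype _ hsum).toMeasure, inferInstance, fun x => ?_⟩
  rw [measureReal_def, PMF.toMeasure_apply_singleton _ _ (measurableSet_singleton x),
    PMF.ofFintype_apply, ENNReal.toReal_ofReal (hq.1 x)]

lemma le_sum_negMulLog_seven_twelfths_quarter_sixth :
    0.87 * Real.log 3 ≤
      Real.negMulLog (7 / 12) + Real.negMulLog (1 / 4) + Real.negMulLog (1 / 6) := by
  -- `0.87` is replaced by the slightly larger `94 / 108`; clearing the denominators `9 * 12` then
  -- leaves an inequality between logarithms of integers.
  have hpow : (7 : ℝ) ^ 63 * 3 ^ 94 ≤ 12 ^ 63 * 4 ^ 27 * 6 ^ 18 := by norm_num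
  have hlog := Real.log_le_log (by positivity) hpow
  rw [Real.log_mul (by positivity) (by positivity), Real.log_mul (by positivity) (by positivity),
    Real.log_mul (by positivity) (by positivity)] at hlog
  simp only [Real.log_pow, Nat.cast_ofNat] at hlog
  simp only [Real.negMulLog, one_div, Real.log_inv, Real.log_div (show (7 : ℝ) ≠ 0 by norm_num)
    (show (12 : ℝ) ≠ 0 by norm_num)]
  linarith [Real.log_nonneg (show (1 : ℝ) ≤ 3 by norm_num)]

/-- The Hausdorff–Besicovitch dimension of `M₀` is at least `0.87`. -/
theorem Mset_zero_dimH_ge :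
    ENNReal.ofReal 0.87 ≤ dimH (Mset 0) := by
  have hq : (![7 / 12, 1 / 4, 1 / 6] : Fin 3 → ℝ) ∈ stdSimplex ℝ (Fin 3) :=
    ⟨by norm_num [Fin.forall_fin_succ], by norm_num [Fin.sum_univ_succ]⟩
  obtain ⟨P, _, hP⟩ := exists_isProbabilityMeasure_real_singleton_eq hq
  have hmean : ∫ j : Fin 3, (j : ℝ) ∂P = P.real {0} := by
    rw [integral_fintype .of_finite]
    norm_num [Fin.sum_univ_succ, hP]
  have hentropy : 0.87 ≤ shannonEntropy P / Real.log 3 := by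
    rw [le_div_iff₀ (Real.log_pos (by norm_num))]
    simpa [shannonEntropy, Fin.sum_univ_three, hP] using
      le_sum_negMulLog_seven_twelfths_quarter_sixth
  have hdim := shannonEntropy_div_log_three_le_dimH_Mset hmean
  exact (ENNReal.ofReal_le_ofReal hentropy).trans hdim
end
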